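/- Let 𝒜 : ℝ^{n₁×n₂} → ℝ^m be a random linear operator represented by matrices A₁,…,A_m whose entries are i.i.d. standard Gaussian N(0,1) random variables, and let τ ∈ [1, n₁]. Then E[ρ_τ^max(𝒜/√m)] ≤ 1 + 3·√(τ n₂ / m). -/

import Mathlib

/-!
Stein's identity `E[f(x) L(x)] = E[Cov(f'(x), L)]` for a centred Gaussian `x` comes from rotation
invariance: with `y` an independent copy of `x`, the expectation of
`f(cos θ x + sin θ y) L(-sin θ x + cos θ y)` does not depend on `θ`, and its derivative at `0` is
the difference of the two sides. Rotating one Gaussian process into an independent one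
and differentiating the expectation of `logSumExp` along the way, this identity yields the
Sudakov–Fernique inequality.

For the process `⟪u, A v⟫` indexed by unit vectors `u` and by `v` in a subset `T` of the unit ball,
compared with `⟪u, g⟫ + ⟪v, h⟫`, Sudakov–Fernique gives Chevet's inequality
`E[sup_{v ∈ T} ‖A v‖] ≤ √m + w(T)`, where `w` is the Gaussian width. It is used twice. With `T` the
unit ball of `ℝ^{n₂}` it bounds the expected operator norm of an `n₁ × n₂` Gaussian matrix by
`√n₁ + √n₂`. With `T` the normalized matrices of ℓ*-rank at most `τ` it bounds the expectation of
`ρ_τ^max`, and there the duality of nuclear and operator norms gives `w(T) ≤ √τ (√n₁ + √n₂)`.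
-/

open scoped BigOperators

noncomputable section

/-- Frobenius norm of a real matrix. -/
def frobNorm {n₁ n₂ : ℕ} (X : Matrix (Fin n₁) (Fin n₂) ℝ) : ℝ :=
  Real.sqrt (∑ i, ∑ j, (X i j) ^ 2)

/-- Singular values of a real matrix: square roots of eigenvalues of `X * Xᴴ`. -/
def singVals {n₁ n₂ : ℕ} (X : Matrix (Fin n₁) (Fin n₂) ℝ) : Fin n₁ → ℝ :=
  fun i => Real.sqrt ((Matrix.isHermitian_mul_conjTranspose_self X).eigenvalues i)

/-- Nuclear norm: sum of singular values. -/
def nuclearNorm {n₁ n₂ : ℕ} (X : Matrix (Fin n₁) (Fin n₂) ℝ) : ℝ :=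
  ∑ i, singVals X i

/-- Operator norm: largest singular value. -/
def matOpNorm {n₁ n₂ : ℕ} (X : Matrix (Fin n₁) (Fin n₂) ℝ) : ℝ :=
  ⨆ i, singVals X i

/-- ℓ*-rank. -/
def lstarRank {n₁ n₂ : ℕ} (X : Matrix (Fin n₁) (Fin n₂) ℝ) : ℝ :=
  nuclearNorm X ^ 2 / frobNorm X ^ 2

/-- Euclidean norm of a vector. -/
def vnorm {m : ℕ} (v : Fin m → ℝ) : ℝ :=
  Real.sqrt (∑ k, (v k) ^ 2)

/-- Matrix inner product. -/
def matInner {n₁ n₂ : ℕ} (X Y : Matrix (Fin n₁) (Fin n₂) ℝ) : ℝ :=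
  (X.transpose * Y).trace

def cmsvMin {n₁ n₂ m : ℕ} (A : Matrix (Fin n₁) (Fin n₂) ℝ → (Fin m → ℝ)) (τ : ℝ) : ℝ :=
  sInf {c | ∃ X : Matrix (Fin n₁) (Fin n₂) ℝ, X ≠ 0 ∧ lstarRank X ≤ τ ∧ c = vnorm (A X) / frobNorm X}

def cmsvMax {n₁ n₂ m : ℕ} (A : Matrix (Fin n₁) (Fin n₂) ℝ → (Fin m → ℝ)) (τ : ℝ) : ℝ :=
  sSup {c | ∃ X : Matrix (Fin n₁) (Fin n₂) ℝ, X ≠ 0 ∧ lstarRank X ≤ τ ∧ c = vnorm (A X) / frobNorm X}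

def rcsvMin {n₁ n₂ m : ℕ} (A : Matrix (Fin n₁) (Fin n₂) ℝ → (Fin m → ℝ)) (r : ℕ) : ℝ :=
  sInf {c | ∃ X : Matrix (Fin n₁) (Fin n₂) ℝ, X ≠ 0 ∧ X.rank ≤ r ∧ c = vnorm (A X) / frobNorm X}

def rcsvMax {n₁ n₂ m : ℕ} (A : Matrix (Fin n₁) (Fin n₂) ℝ → (Fin m → ℝ)) (r : ℕ) : ℝ :=
  sSup {c | ∃ X : Matrix (Fin n₁) (Fin n₂) ℝ, X ≠ 0 ∧ X.rank ≤ r ∧ c = vnorm (A X) / frobNorm X}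

def mRIC {n₁ n₂ m : ℕ} (A : Matrix (Fin n₁) (Fin n₂) ℝ → (Fin m → ℝ)) (r : ℕ) : ℝ :=
  sInf {δ : ℝ | 0 < δ ∧ ∀ X : Matrix (Fin n₁) (Fin n₂) ℝ, X ≠ 0 → X.rank ≤ r →
    1 - δ ≤ (vnorm (A X)) ^ 2 / (frobNorm X) ^ 2 ∧ (vnorm (A X)) ^ 2 / (frobNorm X) ^ 2 ≤ 1 + δ}

def opOf {n₁ n₂ m : ℕ} (A : Fin m → Matrix (Fin n₁) (Fin n₂) ℝ) :
    Matrix (Fin n₁) (Fin n₂) ℝ → (Fin m → ℝ) :=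
  fun X k => matInner (A k) X


open MeasureTheory ProbabilityTheory

/-- The Gaussian ensemble: all entries of the `m` representing matrices are i.i.d. `N(0,1)`. -/
def gaussianEnsemble (m n₁ n₂ : ℕ) : Measure ((Fin m × Fin n₁ × Fin n₂) → ℝ) :=
  Measure.pi fun _ => gaussianReal 0 1

/-- The collection of representing matrices determined by a sample `ω`. -/
def ensembleMatrices {m n₁ n₂ : ℕ} (ω : (Fin m × Fin n₁ × Fin n₂) → ℝ) :
    Fin m → Matrix (Fin n₁) (Fin n₂) ℝ :=
  fun k => Matrix.of fun i j => ω (k, i, j)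

/-- The scaled operator `𝒜/√m` determined by a sample `ω`. -/
def scaledOp {m n₁ n₂ : ℕ} (ω : (Fin m × Fin n₁ × Fin n₂) → ℝ) :
    Matrix (Fin n₁) (Fin n₂) ℝ → (Fin m → ℝ) :=
  fun X k => opOf (ensembleMatrices ω) X k / Real.sqrt m

section GaussianIntegrationByParts

variable {E : Type*} [NormedAddCommGroup E] [NormedSpace ℝ E]

lemma hasDerivAt_rotation_fst (z : E × E) (θ : ℝ) :
    HasDerivAt (fun θ ↦ (ContinuousLinearMap.rotation θ z).1)
      (ContinuousLinearMap.rotation θ z).2 θ := by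
  simp only [ContinuousLinearMap.rotation_apply]
  exact ((Real.hasDerivAt_cos θ).smul_const z.1).add ((Real.hasDerivAt_sin θ).smul_const z.2)

lemma hasDerivAt_rotation_snd (z : E × E) (θ : ℝ) :
    HasDerivAt (fun θ ↦ (ContinuousLinearMap.rotation θ z).2)
      (-(ContinuousLinearMap.rotation θ z).1) θ := by
  simp only [ContinuousLinearMap.rotation_apply, neg_add, ← neg_smul]
  exact ((Real.hasDerivAt_sin θ).neg.smul_const z.1).add ((Real.hasDerivAt_cos θ).smul_const z.2)

lemma hasDerivAt_rotation_fst_mul_dual_snd {f : E → ℝ} (hf : Differentiable ℝ f)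
    (L : StrongDual ℝ E) (z : E × E) (θ : ℝ) :
    HasDerivAt (fun θ ↦ f (ContinuousLinearMap.rotation θ z).1 *
        L (ContinuousLinearMap.rotation θ z).2)
      (fderiv ℝ f (ContinuousLinearMap.rotation θ z).1 (ContinuousLinearMap.rotation θ z).2 *
          L (ContinuousLinearMap.rotation θ z).2 +
        f (ContinuousLinearMap.rotation θ z).1 * L (-(ContinuousLinearMap.rotation θ z).1)) θ :=
  ((hf _).hasFDerivAt.comp_hasDerivAt θ (hasDerivAt_rotation_fst z θ)).mul
    (L.hasFDerivAt.comp_hasDerivAt θ (hasDerivAt_rotation_snd z θ))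

lemma norm_cos_smul_add_sin_smul_le (θ : ℝ) (x y : E) :
    ‖Real.cos θ • x + Real.sin θ • y‖ ≤ ‖x‖ + ‖y‖ := by
  refine (norm_add_le _ _).trans (add_le_add ?_ ?_) <;> rw [norm_smul, Real.norm_eq_abs]
  exacts [mul_le_of_le_one_left (norm_nonneg x) (Real.abs_cos_le_one θ),
    mul_le_of_le_one_left (norm_nonneg y) (Real.abs_sin_le_one θ)]

lemma norm_rotation_apply_le (θ : ℝ) (z : E × E) :
    ‖ContinuousLinearMap.rotation θ z‖ ≤ ‖z.1‖ + ‖z.2‖ := by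
  rw [ContinuousLinearMap.rotation_apply]
  refine max_le (norm_cos_smul_add_sin_smul_le θ z.1 z.2) ?_
  simpa [add_comm] using norm_cos_smul_add_sin_smul_le θ z.2 (-z.1)

variable [MeasurableSpace E] [BorelSpace E] {μ : Measure E}

lemma integrable_covarianceBilinDual_fderiv [IsFiniteMeasure μ] {f : E → ℝ} (hf : ContDiff ℝ 1 f)
    {C : ℝ} (hC : ∀ x, ‖fderiv ℝ f x‖ ≤ C) (L : StrongDual ℝ E) :
    Integrable (fun x ↦ covarianceBilinDual μ (fderiv ℝ f x) L) μ :=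
  .of_bound (((covarianceBilinDual μ).flip L).continuous.comp
    (hf.continuous_fderiv one_ne_zero)).aestronglyMeasurable (‖(covarianceBilinDual μ).flip L‖ * C)
    (.of_forall fun x ↦ ((covarianceBilinDual μ).flip L).le_opNorm_of_le (hC x))

variable [CompleteSpace E] [SecondCountableTopology E] [IsGaussian μ]

lemma integral_rotation_fst_mul_dual_snd (hμ : μ[id] = 0) {f : E → ℝ} (hf : Measurable f)
    (L : StrongDual ℝ E) (θ : ℝ) :
    ∫ z, f (ContinuousLinearMap.rotation θ z).1 * L (ContinuousLinearMap.rotation θ z).2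
      ∂μ.prod μ = 0 := by
  have hL : ∫ y, L y ∂μ = 0 := by
    rw [IsGaussian.integral_dual]
    exact (congrArg L hμ).trans (map_zero L)
  rw [← integral_map (f := fun z : E × E ↦ f z.1 * L z.2) (by fun_prop)
    (by fun_prop), IsGaussian.map_rotation_eq_self hμ, integral_prod_mul, hL, mul_zero]

variable (μ) in
lemma memLp_two_norm_fst_add_norm_snd : MemLp (fun z : E × E ↦ ‖z.1‖ + ‖z.2‖) 2 (μ.prod μ) :=
  ((IsGaussian.memLp_two_id (μ := μ)).comp_fst μ).norm.add
    ((IsGaussian.memLp_two_id (μ := μ)).comp_snd μ).norm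

lemma hasDerivAt_integral_rotation_fst_mul_dual_snd {f : E → ℝ}
    (hf : ContDiff ℝ 1 f) {C C' : ℝ} (hC : ∀ x, ‖f x‖ ≤ C) (hC' : ∀ x, ‖fderiv ℝ f x‖ ≤ C')
    (L : StrongDual ℝ E) :
    HasDerivAt (fun θ ↦ ∫ z, f (ContinuousLinearMap.rotation θ z).1 *
        L (ContinuousLinearMap.rotation θ z).2 ∂μ.prod μ)
      (∫ z, (fderiv ℝ f z.1 z.2 * L z.2 - f z.1 * L z.1) ∂μ.prod μ) 0 := by
  have hf₀ : Continuous f := hf.continuous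
  have : Continuous (fderiv ℝ f) := hf.continuous_fderiv one_ne_zero
  let R (θ : ℝ) (z : E × E) := ContinuousLinearMap.rotation θ z
  let G (θ : ℝ) (z : E × E) := f (R θ z).1 * L (R θ z).2
  let G' (θ : ℝ) (z : E × E) : ℝ :=
    fderiv ℝ f (R θ z).1 (R θ z).2 * L (R θ z).2 + f (R θ z).1 * L (-(R θ z).1)
  let r (z : E × E) := ‖z.1‖ + ‖z.2‖
  have hfst (θ : ℝ) (z : E × E) : ‖(R θ z).1‖ ≤ r z :=
    (norm_fst_le _).trans (norm_rotation_apply_le θ z)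
  have hsnd (θ : ℝ) (z : E × E) : ‖(R θ z).2‖ ≤ r z :=
    (norm_snd_le _).trans (norm_rotation_apply_le θ z)
  have hbound (θ : ℝ) (z : E × E) :
      ‖G' θ z‖ ≤ C' * r z * (‖L‖ * r z) + C * (‖L‖ * r z) := by
    refine norm_add_le_of_le (norm_mul_le_of_le ?_ ?_) (norm_mul_le_of_le (hC _) ?_)
    · exact ContinuousLinearMap.le_of_opNorm_le_of_le _ (hC' _) (hsnd θ z)
    · exact L.le_opNorm_of_le (hsnd θ z)
    · exact L.le_opNorm_of_le ((norm_neg _).trans_le (hfst θ z))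
  have hr : MemLp r 2 (μ.prod μ) := memLp_two_norm_fst_add_norm_snd μ
  have hr_int : Integrable (fun z ↦ C * (‖L‖ * r z)) (μ.prod μ) :=
    ((hr.integrable one_le_two).const_mul _).const_mul _
  have hG_int : Integrable (G 0) (μ.prod μ) := hr_int.mono' (by fun_prop)
    (.of_forall fun z ↦ norm_mul_le_of_le (hC _) (L.le_opNorm_of_le (hsnd 0 z)))
  have hbound_int :
      Integrable (fun z ↦ C' * r z * (‖L‖ * r z) + C * (‖L‖ * r z)) (μ.prod μ) := by
    refine .add ?_ hr_int
    simpa only [mul_mul_mul_comm, sq] using hr.integrable_sq.const_mul (C' * ‖L‖)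
  have hG' : G' 0 = fun z ↦ fderiv ℝ f z.1 z.2 * L z.2 - f z.1 * L z.1 := by
    ext z
    simp [G', R, ContinuousLinearMap.rotation_apply, sub_eq_add_neg]
  rw [← hG']
  exact (hasDerivAt_integral_of_dominated_loc_of_deriv_le Filter.univ_mem
    (.of_forall fun θ ↦ by fun_prop) hG_int (by fun_prop) (.of_forall fun z θ _ ↦ hbound θ z)
    hbound_int (.of_forall fun z θ _ ↦
      hasDerivAt_rotation_fst_mul_dual_snd (hf.differentiable one_ne_zero) L z θ)).2

lemma covarianceBilinDual_eq_integral_mul (hμ : μ[id] = 0) (L M : StrongDual ℝ E) :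
    covarianceBilinDual μ L M = ∫ x, L x * M x ∂μ := by
  simp only [covarianceBilinDual_apply' IsGaussian.memLp_two_id, hμ, sub_zero]

lemma integral_mul_dual_eq_integral_covarianceBilinDual (hμ : μ[id] = 0) {f : E → ℝ}
    (hf : ContDiff ℝ 1 f) {C C' : ℝ} (hC : ∀ x, ‖f x‖ ≤ C) (hC' : ∀ x, ‖fderiv ℝ f x‖ ≤ C')
    (L : StrongDual ℝ E) :
    ∫ x, f x * L x ∂μ = ∫ x, covarianceBilinDual μ (fderiv ℝ f x) L ∂μ := by
  have hf₀ : Continuous f := hf.continuous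
  have : Continuous (fderiv ℝ f) := hf.continuous_fderiv one_ne_zero
  have hderiv : ∫ z, (fderiv ℝ f z.1 z.2 * L z.2 - f z.1 * L z.1) ∂μ.prod μ = 0 := by
    refine (hasDerivAt_integral_rotation_fst_mul_dual_snd hf hC hC' L).unique ?_
    simp_rw [integral_rotation_fst_mul_dual_snd hμ hf₀.measurable L]
    exact hasDerivAt_const 0 0
  have hfL : Integrable (fun z : E × E ↦ f z.1 * L z.1) (μ.prod μ) :=
    (((IsGaussian.integrable_dual μ L).bdd_mul hf₀.aestronglyMeasurable
      (.of_forall hC)).comp_fst μ :)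
  have hf'L : Integrable (fun z : E × E ↦ fderiv ℝ f z.1 z.2 * L z.2) (μ.prod μ) := by
    refine (((IsGaussian.memLp_two_id (μ := μ)).integrable_norm_pow two_ne_zero).comp_snd μ
      |>.const_mul (C' * ‖L‖)).mono' (by fun_prop) (.of_forall fun z ↦ ?_)
    calc ‖fderiv ℝ f z.1 z.2 * L z.2‖ ≤ C' * ‖z.2‖ * (‖L‖ * ‖z.2‖) :=
          norm_mul_le_of_le (ContinuousLinearMap.le_of_opNorm_le _ (hC' _) _) (L.le_opNorm _)
      _ = C' * ‖L‖ * ‖z.2‖ ^ 2 := by ring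
  rw [integral_sub hf'L hfL, sub_eq_zero, integral_prod _ hf'L] at hderiv
  calc ∫ x, f x * L x ∂μ = ∫ z, f z.1 * L z.1 ∂μ.prod μ := by
        rw [integral_fun_fst (fun x ↦ f x * L x)]; simp
    _ = ∫ x, ∫ y, fderiv ℝ f x y * L y ∂μ ∂μ := hderiv.symm
    _ = _ := by simp_rw [covarianceBilinDual_eq_integral_mul hμ]

end GaussianIntegrationByParts

section LogSumExp

variable {ι : Type*} [Fintype ι]

/-- The log-sum-exp function `log ∑ exp xᵢ`, a smooth proxy for `maxᵢ xᵢ` whose error, at most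
`log |ι|`, becomes negligible after scaling `x` up. -/
def logSumExp (x : ι → ℝ) : ℝ := Real.log (∑ i, Real.exp (x i))

/-- The Gibbs weights `exp xᵢ / ∑ exp xⱼ`, which are the partial derivatives of `logSumExp`. -/
def softmax (x : ι → ℝ) (i : ι) : ℝ := Real.exp (x i) / ∑ j, Real.exp (x j)

lemma softmax_nonneg (x : ι → ℝ) (i : ι) : 0 ≤ softmax x i := by
  unfold softmax; positivity

lemma sum_mul_sub_sum_nonneg {p : ι → ℝ} (hp : ∀ i, 0 ≤ p i) (hsum : ∑ i, p i = 1)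
    {K : ι → ι → ℝ} (hK : ∀ i j, K i j + K j i ≤ K i i + K j j) :
    0 ≤ ∑ i, p i * (K i i - ∑ j, p j * K j i) := by
  have hexpand : ∑ i, p i * (K i i - ∑ j, p j * K j i) =
      ∑ i, ∑ j, p i * p j * (K i i - K j i) := by
    refine Finset.sum_congr rfl fun i _ ↦ ?_
    calc p i * (K i i - ∑ j, p j * K j i)
        = p i * ∑ j, p j * (K i i - K j i) := by
          simp_rw [mul_sub, Finset.sum_sub_distrib, ← Finset.sum_mul, hsum, one_mul, mul_sub]
      _ = ∑ j, p i * p j * (K i i - K j i) := by simp_rw [Finset.mul_sum, mul_assoc]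
  have hsymm : 2 * ∑ i, ∑ j, p i * p j * (K i i - K j i) =
      ∑ i, ∑ j, p i * p j * (K i i + K j j - (K i j + K j i)) := by
    nth_rw 1 [two_mul, Finset.sum_comm]
    simp_rw [← Finset.sum_add_distrib]
    exact Finset.sum_congr rfl fun i _ ↦ Finset.sum_congr rfl fun j _ ↦ by ring
  have hnonneg : 0 ≤ ∑ i, ∑ j, p i * p j * (K i i + K j j - (K i j + K j i)) :=
    Finset.sum_nonneg fun i _ ↦ Finset.sum_nonneg fun j _ ↦
      mul_nonneg (mul_nonneg (hp i) (hp j)) (sub_nonneg.2 (hK i j))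
  linarith

variable [Nonempty ι]

lemma sum_exp_pos (x : ι → ℝ) : 0 < ∑ i, Real.exp (x i) :=
  Finset.sum_pos (fun _ _ ↦ Real.exp_pos _) Finset.univ_nonempty

lemma sum_softmax (x : ι → ℝ) : ∑ i, softmax x i = 1 := by
  simp only [softmax, ← Finset.sum_div, div_self (sum_exp_pos x).ne']

lemma softmax_le_one (x : ι → ℝ) (i : ι) : softmax x i ≤ 1 :=
  sum_softmax x ▸ Finset.single_le_sum (fun j _ ↦ softmax_nonneg x j) (Finset.mem_univ i)

lemma le_logSumExp (x : ι → ℝ) (i : ι) : x i ≤ logSumExp x :=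
  (Real.le_log_iff_exp_le (sum_exp_pos x)).2 <|
    Finset.single_le_sum (fun j _ ↦ (Real.exp_pos (x j)).le) (Finset.mem_univ i)

lemma logSumExp_le {x : ι → ℝ} {c : ℝ} (hx : ∀ i, x i ≤ c) :
    logSumExp x ≤ c + Real.log (Fintype.card ι) := by
  have hcard : (0 : ℝ) < Fintype.card ι := Nat.cast_pos.2 Fintype.card_pos
  rw [logSumExp, Real.log_le_iff_le_exp (sum_exp_pos x), Real.exp_add, Real.exp_log hcard, mul_comm]
  simpa using Finset.sum_le_card_nsmul Finset.univ _ _ fun i _ ↦ Real.exp_le_exp.2 (hx i)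

lemma abs_logSumExp_le (x : ι → ℝ) :
    |logSumExp x| ≤ ∑ i, |x i| + Real.log (Fintype.card ι) := by
  have habs (i : ι) : |x i| ≤ ∑ j, |x j| :=
    Finset.single_le_sum (fun j _ ↦ abs_nonneg (x j)) (Finset.mem_univ i)
  refine abs_le.2 ⟨?_, logSumExp_le fun i ↦ (le_abs_self _).trans (habs i)⟩
  obtain ⟨i⟩ := ‹Nonempty ι›
  have hlog : 0 ≤ Real.log (Fintype.card ι) := Real.log_natCast_nonneg _
  linarith [neg_abs_le (x i), habs i, le_logSumExp x i]

lemma continuous_logSumExp : Continuous (logSumExp : (ι → ℝ) → ℝ) :=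
  Continuous.log (by fun_prop) fun x ↦ (sum_exp_pos x).ne'

lemma softmax_eq_exp (x : ι → ℝ) (i : ι) : softmax x i = Real.exp (x i - logSumExp x) := by
  rw [Real.exp_sub, logSumExp, Real.exp_log (sum_exp_pos x), softmax]

variable {E : Type*} [NormedAddCommGroup E] [NormedSpace ℝ E]

lemma hasFDerivAt_logSumExp {f : E → ι → ℝ} {f' : ι → StrongDual ℝ E} {x : E}
    (hf : ∀ i, HasFDerivAt (f · i) (f' i) x) :
    HasFDerivAt (fun y ↦ logSumExp (f y)) (∑ i, softmax (f x) i • f' i) x := by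
  refine ((HasFDerivAt.fun_sum fun i _ ↦ (hf i).exp).log (sum_exp_pos (f x)).ne').congr_fderiv ?_
  simp_rw [Finset.smul_sum, smul_smul, softmax, div_eq_inv_mul]

lemma hasDerivAt_logSumExp {f : ℝ → ι → ℝ} {f' : ι → ℝ} {t : ℝ}
    (hf : ∀ i, HasDerivAt (f · i) (f' i) t) :
    HasDerivAt (fun s ↦ logSumExp (f s)) (∑ i, softmax (f t) i * f' i) t := by
  simpa using (hasFDerivAt_logSumExp fun i ↦ (hf i).hasFDerivAt).hasDerivAt

lemma fderiv_softmax (c : ι → StrongDual ℝ E) (i : ι) (x : E) :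
    fderiv ℝ (fun y ↦ softmax (fun j ↦ c j y) i) x =
      softmax (fun j ↦ c j x) i • (c i - ∑ j, softmax (fun j ↦ c j x) j • c j) := by
  simp_rw [softmax_eq_exp _ i]
  exact ((c i).hasFDerivAt.sub
    (hasFDerivAt_logSumExp fun j ↦ (c j).hasFDerivAt)).exp.fderiv

lemma contDiff_softmax (c : ι → StrongDual ℝ E) (i : ι) {n : WithTop ℕ∞} :
    ContDiff ℝ n fun x ↦ softmax (fun j ↦ c j x) i :=
  ((c i).contDiff.exp).div (ContDiff.sum fun j _ ↦ (c j).contDiff.exp)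
    fun x ↦ (sum_exp_pos fun j ↦ c j x).ne'

lemma norm_fderiv_softmax_le (c : ι → StrongDual ℝ E) (i : ι) (x : E) :
    ‖fderiv ℝ (fun x ↦ softmax (fun j ↦ c j x) i) x‖ ≤ ‖c i‖ + ∑ j, ‖c j‖ := by
  have hsmul (j : ι) (d : StrongDual ℝ E) : ‖softmax (fun j ↦ c j x) j • d‖ ≤ ‖d‖ := by
    rw [norm_smul, Real.norm_of_nonneg (softmax_nonneg _ j)]
    exact mul_le_of_le_one_left (norm_nonneg d) (softmax_le_one _ j)
  rw [fderiv_softmax]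
  exact (hsmul i _).trans (norm_sub_le_of_le le_rfl (norm_sum_le_of_le _ fun j _ ↦ hsmul j (c j)))

end LogSumExp

section Comparison

variable {E : Type*} [NormedAddCommGroup E] [NormedSpace ℝ E]
  [MeasurableSpace E] [BorelSpace E] {μ : Measure E} [IsGaussian μ]
  {ι : Type*} [Fintype ι] [Nonempty ι]

variable (μ) in
lemma integrable_logSumExp_dual (c : ι → StrongDual ℝ E) :
    Integrable (fun x ↦ logSumExp fun i ↦ c i x) μ :=
  ((integrable_finsetSum _ fun i _ ↦ (IsGaussian.integrable_dual μ (c i)).abs).add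
    (integrable_const (Real.log (Fintype.card ι)))).mono'
    (continuous_logSumExp.comp (by fun_prop)).aestronglyMeasurable
    (.of_forall fun x ↦ abs_logSumExp_le _)

variable [CompleteSpace E] [SecondCountableTopology E]

lemma sum_integral_softmax_mul_nonneg (hμ : μ[id] = 0) {c d : ι → StrongDual ℝ E}
    (hcd : ∀ i j, 0 ≤ covarianceBilinDual μ (c i - c j) (d i - d j)) :
    0 ≤ ∑ i, ∫ x, softmax (fun j ↦ c j x) i * d i x ∂μ := by
  let p (i : ι) (x : E) := softmax (fun j ↦ c j x) i
  let K (i j : ι) := covarianceBilinDual μ (c i) (d j)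
  have hK (i j : ι) : K i j + K j i ≤ K i i + K j j := by
    have := hcd i j
    simp only [map_sub, sub_apply] at this
    linarith
  have hstein (i : ι) : ∫ x, p i x * d i x ∂μ =
      ∫ x, covarianceBilinDual μ (fderiv ℝ (p i) x) (d i) ∂μ :=
    integral_mul_dual_eq_integral_covarianceBilinDual (C := 1) hμ (contDiff_softmax c i)
      (fun x ↦ by simpa [abs_of_nonneg, softmax_nonneg] using softmax_le_one _ i)
      (norm_fderiv_softmax_le c i) (d i)
  rw [Finset.sum_congr rfl fun i _ ↦ hstein i, ← integral_finsetSum _ fun i _ ↦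
    integrable_covarianceBilinDual_fderiv (contDiff_softmax c i) (norm_fderiv_softmax_le c i) (d i)]
  refine integral_nonneg fun x ↦ ?_
  simpa [p, fderiv_softmax] using
    sum_mul_sub_sum_nonneg (softmax_nonneg fun j ↦ c j x) (sum_softmax _) hK

variable (μ) in
lemma hasDerivAt_integral_logSumExp_rotation (z : ι → StrongDual ℝ E × StrongDual ℝ E) (t : ℝ) :
    HasDerivAt
      (fun t ↦ ∫ x, logSumExp (fun i ↦ (ContinuousLinearMap.rotation t (z i)).1 x) ∂μ)
      (∑ i, ∫ x, softmax (fun j ↦ (ContinuousLinearMap.rotation t (z j)).1 x) i *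
        (ContinuousLinearMap.rotation t (z i)).2 x ∂μ) t := by
  let P (t : ℝ) (i : ι) := (ContinuousLinearMap.rotation t (z i)).1
  let Q (t : ℝ) (i : ι) := (ContinuousLinearMap.rotation t (z i)).2
  let G' (i : ι) (t : ℝ) (x : E) := softmax (fun j ↦ P t j x) i * Q t i x
  have hderiv (x : E) (t : ℝ) : HasDerivAt (fun t ↦ logSumExp fun i ↦ P t i x)
      (∑ i, G' i t x) t :=
    hasDerivAt_logSumExp fun i ↦ by
      simpa using (hasDerivAt_rotation_fst (z i) t).clm_apply (hasDerivAt_const t x)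
  have hbound (i : ι) (t : ℝ) (x : E) : ‖G' i t x‖ ≤ (‖(z i).1‖ + ‖(z i).2‖) * ‖x‖ := by
    rw [norm_mul, Real.norm_of_nonneg (softmax_nonneg _ i)]
    exact (mul_le_of_le_one_left (norm_nonneg _) (softmax_le_one _ i)).trans <|
      ContinuousLinearMap.le_of_opNorm_le _
        ((norm_snd_le _).trans (norm_rotation_apply_le t (z i))) x
  have hcont (i : ι) (t : ℝ) : Continuous (G' i t) :=
    (contDiff_softmax (P t) i (n := 0)).continuous.mul (Q t i).continuous
  have hbound_int (i : ι) : Integrable (fun x ↦ (‖(z i).1‖ + ‖(z i).2‖) * ‖x‖) μ :=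
    IsGaussian.integrable_id.norm.const_mul _
  have hG'_int (i : ι) : Integrable (G' i t) μ :=
    (hbound_int i).mono' (hcont i t).aestronglyMeasurable (.of_forall (hbound i t))
  rw [← integral_finsetSum _ fun i _ ↦ hG'_int i]
  exact (hasDerivAt_integral_of_dominated_loc_of_deriv_le Filter.univ_mem
    (.of_forall fun t ↦ (integrable_logSumExp_dual μ (P t)).aestronglyMeasurable)
    (integrable_logSumExp_dual μ (P t))
    (continuous_finsetSum _ fun i _ ↦ hcont i t).aestronglyMeasurable
    (.of_forall fun x t _ ↦ norm_sum_le_of_le _ fun i _ ↦ hbound i t x)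
    (integrable_finsetSum _ fun i _ ↦ hbound_int i) (.of_forall fun x t _ ↦ hderiv x t)).2

lemma integral_logSumExp_le_of_covarianceBilinDual_eq_zero (hμ : μ[id] = 0)
    {a b : ι → StrongDual ℝ E} (hab : ∀ i j, covarianceBilinDual μ (a i) (b j) = 0)
    (hle : ∀ i j, covarianceBilinDual μ (a i - a j) (a i - a j) ≤
      covarianceBilinDual μ (b i - b j) (b i - b j)) :
    ∫ x, logSumExp (fun i ↦ a i x) ∂μ ≤ ∫ x, logSumExp (fun i ↦ b i x) ∂μ := by
  let φ (t : ℝ) :=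
    ∫ x, logSumExp (fun i ↦ (ContinuousLinearMap.rotation t (a i, b i)).1 x) ∂μ
  have hderiv (t : ℝ) := hasDerivAt_integral_logSumExp_rotation μ (fun i ↦ (a i, b i)) t
  have hmono : MonotoneOn φ (Set.Icc 0 (Real.pi / 2)) := by
    refine monotoneOn_of_hasDerivWithinAt_nonneg (convex_Icc _ _)
      (fun t _ ↦ (hderiv t).continuousAt.continuousWithinAt)
      (fun t _ ↦ (hderiv t).hasDerivWithinAt)
      fun t ht ↦ sum_integral_softmax_mul_nonneg hμ fun i j ↦ ?_
    rw [interior_Icc] at ht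
    have hsin : 0 ≤ Real.sin t :=
      Real.sin_nonneg_of_nonneg_of_le_pi ht.1.le (by linarith [ht.2, Real.pi_pos])
    have hcos : 0 ≤ Real.cos t :=
      Real.cos_nonneg_of_mem_Icc ⟨by linarith [ht.1, Real.pi_pos], ht.2.le⟩
    have hcross : covarianceBilinDual μ (a i - a j) (b i - b j) = 0 := by simp [hab]
    have hcross' : covarianceBilinDual μ (b i - b j) (a i - a j) = 0 :=
      (covarianceBilinDual_comm _ _).trans hcross
    rw [← Prod.fst_sub, ← Prod.snd_sub, ← map_sub, Prod.mk_sub_mk]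
    simp only [ContinuousLinearMap.rotation_apply, map_add, map_smul, add_apply,
      smul_apply, smul_eq_mul, hcross, hcross']
    have := mul_nonneg (mul_nonneg hsin hcos) (sub_nonneg.2 (hle i j))
    linarith
  have hpi : 0 ≤ Real.pi / 2 := by positivity
  simpa [φ, ContinuousLinearMap.rotation_apply] using
    hmono (Set.left_mem_Icc.2 hpi) (Set.right_mem_Icc.2 hpi) hpi

end Comparison

section SudakovFernique

variable {E F : Type*} [NormedAddCommGroup E] [NormedSpace ℝ E]
  [NormedAddCommGroup F] [NormedSpace ℝ F] {I : Type*}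

lemma bddAbove_range_dual_apply {c : I → StrongDual ℝ E} (hc : Bornology.IsBounded (Set.range c))
    (x : E) : BddAbove (Set.range fun i ↦ c i x) := by
  obtain ⟨C, hC⟩ := hc.exists_norm_le
  refine ⟨C * ‖x‖, Set.forall_mem_range.2 fun i ↦ (le_abs_self _).trans ?_⟩
  exact (c i).le_of_opNorm_le (hC _ (Set.mem_range_self i)) x

lemma measurable_iSup_dual_apply [MeasurableSpace E] [BorelSpace E] {c : I → StrongDual ℝ E}
    (hc : Bornology.IsBounded (Set.range c)) : Measurable fun x ↦ ⨆ i, c i x :=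
  (lowerSemicontinuous_ciSup (bddAbove_range_dual_apply hc)
    fun i ↦ (c i).continuous.lowerSemicontinuous).measurable

lemma abs_iSup_dual_apply_le [Nonempty I] {c : I → StrongDual ℝ E} {C : ℝ}
    (hC : ∀ i, ‖c i‖ ≤ C) (x : E) : |⨆ i, c i x| ≤ C * ‖x‖ := by
  have habs (i : I) : |c i x| ≤ C * ‖x‖ := (c i).le_of_opNorm_le (hC i) x
  have hbdd : BddAbove (Set.range fun i ↦ c i x) :=
    ⟨C * ‖x‖, Set.forall_mem_range.2 fun i ↦ (abs_le.1 (habs i)).2⟩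
  obtain ⟨i⟩ := ‹Nonempty I›
  exact abs_le.2 ⟨(abs_le.1 (habs i)).1.trans (le_ciSup hbdd i),
    ciSup_le fun i ↦ (abs_le.1 (habs i)).2⟩

lemma variance_smul_sub_smul [MeasurableSpace E] (μ : Measure E) (r : ℝ)
    (l l' : StrongDual ℝ E) : Var[⇑(r • l - r • l'); μ] = r ^ 2 * Var[⇑(l - l'); μ] := by
  have hsub : r • l - r • l' = r • (l - l') := (smul_sub r l l').symm
  rw [hsub, FunLike.coe_smul, variance_smul]

variable [MeasurableSpace E] [BorelSpace E] [CompleteSpace E] [SecondCountableTopology E]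
  [MeasurableSpace F] [BorelSpace F] [CompleteSpace F] [SecondCountableTopology F]
  {μ : Measure E} [IsGaussian μ] {ν : Measure F} [IsGaussian ν]

variable (μ) in
lemma integrable_iSup_dual_apply [Nonempty I] {c : I → StrongDual ℝ E}
    (hc : Bornology.IsBounded (Set.range c)) : Integrable (fun x ↦ ⨆ i, c i x) μ := by
  obtain ⟨C, hC⟩ := hc.exists_norm_le
  exact (IsGaussian.integrable_id.norm.const_mul C).mono'
    (measurable_iSup_dual_apply hc).aestronglyMeasurable
    (.of_forall fun x ↦ abs_iSup_dual_apply_le (fun i ↦ hC _ (Set.mem_range_self i)) x)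

lemma integral_id_prod_eq_zero (hμ : μ[id] = 0) (hν : ν[id] = 0) : (μ.prod ν)[id] = 0 := by
  ext
  · calc ((μ.prod ν)[id]).1 = ∫ z, z.1 ∂μ.prod ν := fst_integral IsGaussian.integrable_id
      _ = μ[id] := by simp [integral_fun_fst fun x : E ↦ x]
      _ = 0 := hμ
  · calc ((μ.prod ν)[id]).2 = ∫ z, z.2 ∂μ.prod ν := snd_integral IsGaussian.integrable_id
      _ = ν[id] := by simp [integral_fun_snd fun y : F ↦ y]
      _ = 0 := hν

lemma integral_logSumExp_le_of_variance_sub_le [Fintype I] [Nonempty I] (hμ : μ[id] = 0)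
    (hν : ν[id] = 0) {L : I → StrongDual ℝ E} {M : I → StrongDual ℝ F}
    (hLM : ∀ i j, Var[⇑(L i - L j); μ] ≤ Var[⇑(M i - M j); ν]) :
    ∫ x, logSumExp (fun i ↦ L i x) ∂μ ≤ ∫ y, logSumExp (fun i ↦ M i y) ∂ν := by
  let a (i : I) : StrongDual ℝ (E × F) := (L i).comp (.fst ℝ E F)
  let b (i : I) : StrongDual ℝ (E × F) := (M i).comp (.snd ℝ E F)
  have hab (i j : I) : covarianceBilinDual (μ.prod ν) (a i) (b j) = 0 := by
    rw [covarianceBilinDual_eq_covariance IsGaussian.memLp_two_id]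
    exact covariance_fst_snd_prod (IsGaussian.memLp_dual μ (L i) 2 (by simp))
      (IsGaussian.memLp_dual ν (M j) 2 (by simp))
  have hle (i j : I) : covarianceBilinDual (μ.prod ν) (a i - a j) (a i - a j) ≤
      covarianceBilinDual (μ.prod ν) (b i - b j) (b i - b j) := by
    simp_rw [covarianceBilinDual_self_eq_variance IsGaussian.memLp_two_id]
    have ha : Var[⇑(a i - a j); μ.prod ν] = Var[⇑(L i - L j); μ] :=
      measurePreserving_fst.variance_fun_comp (f := L i - L j) (by fun_prop)
    have hb : Var[⇑(b i - b j); μ.prod ν] = Var[⇑(M i - M j); ν] :=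
      measurePreserving_snd.variance_fun_comp (f := M i - M j) (by fun_prop)
    exact ha.trans_le ((hLM i j).trans_eq hb.symm)
  simpa [a, b, integral_fun_fst (fun x ↦ logSumExp fun i ↦ L i x),
    integral_fun_snd (fun y ↦ logSumExp fun i ↦ M i y)] using
    integral_logSumExp_le_of_covarianceBilinDual_eq_zero (integral_id_prod_eq_zero hμ hν) hab hle

lemma integral_iSup_le_of_variance_sub_le_of_finite [Finite I] [Nonempty I] (hμ : μ[id] = 0)
    (hν : ν[id] = 0) {L : I → StrongDual ℝ E} {M : I → StrongDual ℝ F}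
    (hLM : ∀ i j, Var[⇑(L i - L j); μ] ≤ Var[⇑(M i - M j); ν]) :
    ∫ x, ⨆ i, L i x ∂μ ≤ ∫ y, ⨆ i, M i y ∂ν := by
  have := Fintype.ofFinite I
  have hL := integrable_iSup_dual_apply μ (Set.finite_range L).isBounded
  have hM := integrable_iSup_dual_apply ν (Set.finite_range M).isBounded
  have hscaled (β : ℝ) (hβ : 0 < β) : β * ∫ x, ⨆ i, L i x ∂μ ≤
      β * (∫ y, ⨆ i, M i y ∂ν) + Real.log (Fintype.card I) := by
    have hvar (i j : I) : Var[⇑(β • L i - β • L j); μ] ≤ Var[⇑(β • M i - β • M j); ν] := by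
      simp_rw [variance_smul_sub_smul]
      exact mul_le_mul_of_nonneg_left (hLM i j) (sq_nonneg β)
    calc β * ∫ x, ⨆ i, L i x ∂μ = ∫ x, β * ⨆ i, L i x ∂μ := (integral_const_mul _ _).symm
      _ ≤ ∫ x, logSumExp (fun i ↦ (β • L i) x) ∂μ := by
        refine integral_mono (hL.const_mul β) (integrable_logSumExp_dual μ _) fun x ↦ ?_
        rw [Real.mul_iSup_of_nonneg hβ.le]
        exact ciSup_le (le_logSumExp fun i ↦ (β • L i) x)
      _ ≤ ∫ y, logSumExp (fun i ↦ (β • M i) y) ∂ν :=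
        integral_logSumExp_le_of_variance_sub_le hμ hν hvar
      _ ≤ ∫ y, (β * (⨆ i, M i y) + Real.log (Fintype.card I)) ∂ν := by
        refine integral_mono (integrable_logSumExp_dual ν _)
          ((hM.const_mul β).add (integrable_const _)) fun y ↦ logSumExp_le fun i ↦ ?_
        exact mul_le_mul_of_nonneg_left (le_ciSup (Set.finite_range fun i ↦ M i y).bddAbove i) hβ.le
      _ = β * (∫ y, ⨆ i, M i y ∂ν) + Real.log (Fintype.card I) := by
        rw [integral_add (hM.const_mul β) (integrable_const _), integral_const_mul]
        simp
  by_contra! hlt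
  have hgap := sub_pos.2 hlt
  have hlog : 0 ≤ Real.log (Fintype.card I) := Real.log_natCast_nonneg _
  have := hscaled _ (div_pos (add_pos_of_nonneg_of_pos hlog one_pos) hgap)
  rw [← sub_le_iff_le_add', ← mul_sub, div_mul_cancel₀ _ hgap.ne'] at this
  linarith

variable (μ) in
lemma exists_finite_integral_iSup_le_add [Nonempty I] {L : I → StrongDual ℝ E}
    (hL : TotallyBounded (Set.range L)) {ε : ℝ} (hε : 0 < ε) :
    ∃ s : Set I, s.Finite ∧ s.Nonempty ∧
      ∫ x, ⨆ i, L i x ∂μ ≤ ∫ x, ⨆ i : s, L i x ∂μ + (∫ x, ‖x‖ ∂μ) * ε := by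
  obtain ⟨s, hs, hcover⟩ : ∃ s : Set I, s.Finite ∧ ∀ i, ∃ j ∈ s, ‖L i - L j‖ < ε := by
    obtain ⟨t, htL, ht, hcover⟩ := Metric.finite_approx_of_totallyBounded hL ε hε
    obtain ⟨s, -, hs, rfl⟩ := Set.exists_subset_image_finite_and.1
      ⟨t, htL.trans_eq Set.image_univ.symm, ht, rfl⟩
    refine ⟨s, hs, fun i ↦ ?_⟩
    simpa [dist_eq_norm] using Set.mem_iUnion₂.1 (hcover (Set.mem_range_self i))
  have := hs.to_subtype
  obtain ⟨j₀, hj₀, -⟩ := hcover (Classical.arbitrary I)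
  have : Nonempty s := ⟨⟨j₀, hj₀⟩⟩
  have happrox (x : E) : ⨆ i, L i x ≤ (⨆ j : s, L j x) + ‖x‖ * ε := by
    refine ciSup_le fun i ↦ ?_
    obtain ⟨j, hj, hij⟩ := hcover i
    have hLj : L j x ≤ ⨆ j : s, L j x :=
      le_ciSup (f := fun j : s ↦ L j x) (Set.finite_range _).bddAbove ⟨j, hj⟩
    have hdiff := (le_abs_self _).trans ((L i - L j).le_of_opNorm_le hij.le x)
    rw [sub_apply] at hdiff
    linarith
  have hs_int := integrable_iSup_dual_apply μ (Set.finite_range fun j : s ↦ L j).isBounded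
  have hnorm : Integrable (fun x ↦ ‖x‖ * ε) μ := IsGaussian.integrable_id.norm.mul_const ε
  refine ⟨s, hs, ⟨j₀, hj₀⟩, ?_⟩
  calc ∫ x, ⨆ i, L i x ∂μ ≤ ∫ x, ((⨆ j : s, L j x) + ‖x‖ * ε) ∂μ :=
        integral_mono (integrable_iSup_dual_apply μ hL.isBounded) (hs_int.add hnorm) happrox
    _ = ∫ x, ⨆ j : s, L j x ∂μ + (∫ x, ‖x‖ ∂μ) * ε := by
        rw [integral_add hs_int hnorm, integral_mul_const]

theorem integral_iSup_le_of_variance_sub_le [Nonempty I] (hμ : μ[id] = 0) (hν : ν[id] = 0)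
    {L : I → StrongDual ℝ E} {M : I → StrongDual ℝ F} (hL : TotallyBounded (Set.range L))
    (hM : Bornology.IsBounded (Set.range M))
    (hLM : ∀ i j, Var[⇑(L i - L j); μ] ≤ Var[⇑(M i - M j); ν]) :
    ∫ x, ⨆ i, L i x ∂μ ≤ ∫ y, ⨆ i, M i y ∂ν := by
  refine le_of_forall_pos_le_add fun δ hδ ↦ ?_
  obtain ⟨ε, hε, hεδ⟩ := exists_pos_mul_lt hδ (∫ x, ‖x‖ ∂μ)
  obtain ⟨s, hs, hs₀, hLs⟩ := exists_finite_integral_iSup_le_add μ hL hε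
  have := hs.to_subtype
  have := hs₀.to_subtype
  have hMs : Bornology.IsBounded (Set.range fun i : s ↦ M i) :=
    hM.subset (Set.range_comp_subset_range ((↑) : s → I) M)
  calc ∫ x, ⨆ i, L i x ∂μ ≤ ∫ x, ⨆ i : s, L i x ∂μ + (∫ x, ‖x‖ ∂μ) * ε := hLs
    _ ≤ ∫ y, ⨆ i : s, M i y ∂ν + δ := add_le_add
        (integral_iSup_le_of_variance_sub_le_of_finite hμ hν fun _ _ ↦ hLM _ _) hεδ.le
    _ ≤ ∫ y, ⨆ i, M i y ∂ν + δ := add_le_add_left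
        (integral_mono (integrable_iSup_dual_apply ν hMs) (integrable_iSup_dual_apply ν hM)
          fun y ↦ ciSup_le fun i ↦ le_ciSup (bddAbove_range_dual_apply hM y) i) δ

end SudakovFernique

section Chevet

open scoped RealInnerProductSpace

section GaussianWidth

variable {E : Type*} [NormedAddCommGroup E] [InnerProductSpace ℝ E] {T : Set E}

lemma bddAbove_range_inner (hT : Bornology.IsBounded T) (x : E) :
    BddAbove (Set.range fun v : T ↦ ⟪(v : E), x⟫) := by
  obtain ⟨C, hC⟩ := hT.exists_norm_le
  exact ⟨C * ‖x‖, Set.forall_mem_range.2 fun v ↦ (real_inner_le_norm _ _).trans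
    (mul_le_mul_of_nonneg_right (hC v v.2) (norm_nonneg x))⟩

variable [FiniteDimensional ℝ E] [MeasurableSpace E] [BorelSpace E]

variable (E) in
lemma integral_norm_sq_stdGaussian :
    ∫ x, ‖x‖ ^ 2 ∂stdGaussian E = Module.finrank ℝ E := by
  let b := stdOrthonormalBasis ℝ E
  have hL2 (i) : MemLp (innerSL ℝ (b i)) 2 (stdGaussian E) := IsGaussian.memLp_dual _ _ _ (by simp)
  have hcoord (i) : ∫ x, ⟪b i, x⟫ ^ 2 ∂stdGaussian E = 1 := by
    have hvar := variance_dual_stdGaussian (innerSL ℝ (b i))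
    rw [variance_of_integral_eq_zero (hL2 i).aemeasurable
      (integral_strongDual_stdGaussian _)] at hvar
    simpa using hvar
  calc ∫ x, ‖x‖ ^ 2 ∂stdGaussian E = ∫ x, ∑ i, ⟪b i, x⟫ ^ 2 ∂stdGaussian E := by
        simp_rw [b.sum_sq_inner_right]
    _ = ∑ i, ∫ x, ⟪b i, x⟫ ^ 2 ∂stdGaussian E :=
        integral_finsetSum _ fun i _ ↦ (hL2 i).integrable_sq
    _ = Module.finrank ℝ E := by simp [hcoord]

variable (E) in
lemma integral_norm_stdGaussian_le :
    ∫ x, ‖x‖ ∂stdGaussian E ≤ √(Module.finrank ℝ E) := by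
  refine Real.le_sqrt_of_sq_le ?_
  have hL2 : MemLp (fun x : E ↦ ‖x‖) 2 (stdGaussian E) := IsGaussian.memLp_two_id.norm
  have hvar := variance_nonneg (fun x : E ↦ ‖x‖) (stdGaussian E)
  rw [variance_eq_sub hL2] at hvar
  simpa [integral_norm_sq_stdGaussian] using hvar

/-- The Gaussian width `E[sup_{v ∈ T} ⟪v, x⟫]` of a set `T`, with `x` a standard Gaussian vector.
It is meaningful for nonempty bounded `T`. -/
def gaussianWidth (T : Set E) : ℝ := ∫ x, ⨆ v : T, ⟪(v : E), x⟫ ∂stdGaussian E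

lemma integrable_iSup_inner (hT : T.Nonempty) (hT' : Bornology.IsBounded T) :
    Integrable (fun x ↦ ⨆ v : T, ⟪(v : E), x⟫) (stdGaussian E) := by
  have := hT.to_subtype
  obtain ⟨C, hC⟩ := hT'.exists_norm_le
  refine integrable_iSup_dual_apply (stdGaussian E) (c := fun v : T ↦ innerSL ℝ (v : E)) ?_
  exact isBounded_iff_forall_norm_le.2
    ⟨C, Set.forall_mem_range.2 fun v ↦ (innerSL_apply_norm ℝ (v : E)).trans_le (hC v v.2)⟩

lemma gaussianWidth_nonneg (hT : T.Nonempty) (hT' : Bornology.IsBounded T) :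
    0 ≤ gaussianWidth T := by
  obtain ⟨v₀, hv₀⟩ := id hT
  calc 0 = ∫ x, ⟪v₀, x⟫ ∂stdGaussian E := (integral_strongDual_stdGaussian (innerSL ℝ v₀)).symm
    _ ≤ gaussianWidth T := integral_mono (IsGaussian.integrable_dual _ (innerSL ℝ v₀))
        (integrable_iSup_inner hT hT') fun x ↦ le_ciSup (bddAbove_range_inner hT' x) ⟨v₀, hv₀⟩

lemma gaussianWidth_le_integral (hT : T.Nonempty) (hT' : Bornology.IsBounded T) {f : E → ℝ}
    (hf : Integrable f (stdGaussian E)) (hTf : ∀ v ∈ T, ∀ x, ⟪v, x⟫ ≤ f x) :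
    gaussianWidth T ≤ ∫ x, f x ∂stdGaussian E := by
  have := hT.to_subtype
  exact integral_mono (integrable_iSup_inner hT hT') hf fun x ↦ ciSup_le fun v ↦ hTf v v.2 x

variable (E) in
lemma gaussianWidth_closedBall_le :
    gaussianWidth (Metric.closedBall (0 : E) 1) ≤ √(Module.finrank ℝ E) := by
  refine (gaussianWidth_le_integral (Metric.nonempty_closedBall.2 zero_le_one)
    Metric.isBounded_closedBall IsGaussian.integrable_id.norm fun v hv x ↦ ?_).trans
    (integral_norm_stdGaussian_le E)
  exact (real_inner_le_norm v x).trans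
    (mul_le_of_le_one_left (norm_nonneg x) (mem_closedBall_zero_iff.1 hv))

end GaussianWidth

variable {κ ι : Type*} [Fintype κ] [Fintype ι]

/-- The rank-one matrix `u vᵀ`, as a vector in the Euclidean space of `κ × ι` matrices. -/
def outer (u : EuclideanSpace ℝ κ) (v : EuclideanSpace ℝ ι) : EuclideanSpace ℝ (κ × ι) :=
  WithLp.toLp 2 fun p ↦ u p.1 * v p.2

lemma inner_outer_outer (u u' : EuclideanSpace ℝ κ) (v v' : EuclideanSpace ℝ ι) :
    ⟪outer u v, outer u' v'⟫ = ⟪u, u'⟫ * ⟪v, v'⟫ := by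
  simp only [outer, PiLp.inner_apply, RCLike.inner_apply, conj_trivial, Fintype.sum_prod_type,
    Finset.sum_mul_sum]
  exact Finset.sum_congr rfl fun _ _ ↦ Finset.sum_congr rfl fun _ _ ↦ by ring

lemma norm_outer (u : EuclideanSpace ℝ κ) (v : EuclideanSpace ℝ ι) :
    ‖outer u v‖ = ‖u‖ * ‖v‖ := by
  rw [← sq_eq_sq₀ (norm_nonneg _) (by positivity), mul_pow]
  simp_rw [← real_inner_self_eq_norm_sq, inner_outer_outer]

lemma norm_outer_sub_outer_sq_le {u u' : EuclideanSpace ℝ κ} {v v' : EuclideanSpace ℝ ι}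
    (hu : ‖u‖ = 1) (hu' : ‖u'‖ = 1) (hv : ‖v‖ ≤ 1) (hv' : ‖v'‖ ≤ 1) :
    ‖outer u v - outer u' v'‖ ^ 2 ≤ ‖u - u'‖ ^ 2 + ‖v - v'‖ ^ 2 := by
  have ha : ⟪u, u'⟫ ≤ 1 := (real_inner_le_norm u u').trans (by simp [hu, hu'])
  have hb : ⟪v, v'⟫ ≤ 1 := (real_inner_le_norm v v').trans (mul_le_one₀ hv (norm_nonneg _) hv')
  simp_rw [norm_sub_sq_real, inner_outer_outer, norm_outer, hu, hu']
  linarith [mul_nonneg (sub_nonneg.2 ha) (sub_nonneg.2 hb)]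

lemma variance_innerSL_sub {E : Type*} [NormedAddCommGroup E] [InnerProductSpace ℝ E]
    [FiniteDimensional ℝ E] [MeasurableSpace E] [BorelSpace E] (u v : E) :
    Var[⇑(innerSL ℝ u - innerSL ℝ v); stdGaussian E] = ‖u - v‖ ^ 2 := by
  rw [← map_sub, variance_dual_stdGaussian, innerSL_apply_norm]

lemma variance_coprod_innerSL_sub (u u' : EuclideanSpace ℝ κ) (v v' : EuclideanSpace ℝ ι) :
    Var[⇑((innerSL ℝ u).coprod (innerSL ℝ v) - (innerSL ℝ u').coprod (innerSL ℝ v'));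
      (stdGaussian (EuclideanSpace ℝ κ)).prod (stdGaussian (EuclideanSpace ℝ ι))] =
    ‖u - u'‖ ^ 2 + ‖v - v'‖ ^ 2 := by
  rw [variance_dual_prod IsGaussian.memLp_two_id IsGaussian.memLp_two_id]
  simp only [ContinuousLinearMap.sub_comp, ContinuousLinearMap.coprod_comp_inl,
    ContinuousLinearMap.coprod_comp_inr, variance_innerSL_sub]

lemma norm_coprod_innerSL_le {u : EuclideanSpace ℝ κ} {v : EuclideanSpace ℝ ι} (hu : ‖u‖ ≤ 1)
    (hv : ‖v‖ ≤ 1) : ‖(innerSL ℝ u).coprod (innerSL ℝ v)‖ ≤ 2 := by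
  refine ContinuousLinearMap.opNorm_le_bound _ zero_le_two fun z ↦ ?_
  calc ‖⟪u, z.1⟫ + ⟪v, z.2⟫‖ ≤ ‖u‖ * ‖z.1‖ + ‖v‖ * ‖z.2‖ :=
        norm_add_le_of_le (norm_inner_le_norm _ _) (norm_inner_le_norm _ _)
    _ ≤ 1 * ‖z‖ + 1 * ‖z‖ := by
        gcongr
        exacts [norm_fst_le z, norm_snd_le z]
    _ = 2 * ‖z‖ := by ring

variable {T : Set (EuclideanSpace ℝ ι)}

lemma isBounded_range_coprod_innerSL (hT : T ⊆ Metric.closedBall 0 1) :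
    Bornology.IsBounded (Set.range fun p : Metric.sphere (0 : EuclideanSpace ℝ κ) 1 × T ↦
      (innerSL ℝ p.1.1).coprod (innerSL ℝ p.2.1)) :=
  isBounded_iff_forall_norm_le.2 ⟨2, Set.forall_mem_range.2 fun p ↦
    norm_coprod_innerSL_le (mem_sphere_zero_iff_norm.1 p.1.2).le
      (mem_closedBall_zero_iff.1 (hT p.2.2))⟩

lemma totallyBounded_range_innerSL_outer (hT : T ⊆ Metric.closedBall 0 1) :
    TotallyBounded (Set.range fun p : Metric.sphere (0 : EuclideanSpace ℝ κ) 1 × T ↦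
      innerSL ℝ (outer p.1.1 p.2.1)) := by
  have hball := isCompact_closedBall (0 : StrongDual ℝ (EuclideanSpace ℝ (κ × ι))) 1
  refine hball.totallyBounded.subset (Set.range_subset_iff.2 fun p ↦ mem_closedBall_zero_iff.2 ?_)
  rw [innerSL_apply_norm, norm_outer, mem_sphere_zero_iff_norm.1 p.1.2, one_mul]
  exact mem_closedBall_zero_iff.1 (hT p.2.2)

lemma integral_iSup_inner_outer_le [Nonempty κ] (hT : T.Nonempty)
    (hT' : T ⊆ Metric.closedBall 0 1) :
    ∫ A, ⨆ p : Metric.sphere (0 : EuclideanSpace ℝ κ) 1 × T, ⟪outer p.1.1 p.2.1, A⟫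
      ∂stdGaussian (EuclideanSpace ℝ (κ × ι)) ≤
    ∫ z, ⨆ p : Metric.sphere (0 : EuclideanSpace ℝ κ) 1 × T, (⟪p.1.1, z.1⟫ + ⟪p.2.1, z.2⟫)
      ∂(stdGaussian (EuclideanSpace ℝ κ)).prod (stdGaussian (EuclideanSpace ℝ ι)) := by
  have := hT.to_subtype
  have : Nonempty (Metric.sphere (0 : EuclideanSpace ℝ κ) 1) :=
    (NormedSpace.sphere_nonempty.2 zero_le_one).to_subtype
  have hu (p : Metric.sphere (0 : EuclideanSpace ℝ κ) 1 × T) : ‖p.1.1‖ = 1 :=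
    mem_sphere_zero_iff_norm.1 p.1.2
  have hv (p : Metric.sphere (0 : EuclideanSpace ℝ κ) 1 × T) : ‖p.2.1‖ ≤ 1 :=
    mem_closedBall_zero_iff.1 (hT' p.2.2)
  refine integral_iSup_le_of_variance_sub_le integral_id_stdGaussian
    (integral_id_prod_eq_zero integral_id_stdGaussian integral_id_stdGaussian)
    (L := fun p : Metric.sphere (0 : EuclideanSpace ℝ κ) 1 × T ↦ innerSL ℝ (outer p.1.1 p.2.1))
    (M := fun p ↦ (innerSL ℝ p.1.1).coprod (innerSL ℝ p.2.1))
    (totallyBounded_range_innerSL_outer hT') (isBounded_range_coprod_innerSL hT') fun p q ↦ ?_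
  rw [variance_innerSL_sub, variance_coprod_innerSL_sub]
  exact norm_outer_sub_outer_sq_le (hu p) (hu q) (hv p) (hv q)

lemma integral_iSup_inner_add_inner_le [Nonempty κ] (hT : T.Nonempty)
    (hT' : T ⊆ Metric.closedBall 0 1) :
    ∫ z, ⨆ p : Metric.sphere (0 : EuclideanSpace ℝ κ) 1 × T, (⟪p.1.1, z.1⟫ + ⟪p.2.1, z.2⟫)
      ∂(stdGaussian (EuclideanSpace ℝ κ)).prod (stdGaussian (EuclideanSpace ℝ ι)) ≤
    √(Fintype.card κ) + gaussianWidth T := by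
  have := hT.to_subtype
  have : Nonempty (Metric.sphere (0 : EuclideanSpace ℝ κ) 1) :=
    (NormedSpace.sphere_nonempty.2 zero_le_one).to_subtype
  have hTbdd : Bornology.IsBounded T := Metric.isBounded_closedBall.subset hT'
  have hwidth := integrable_iSup_inner hT hTbdd
  have hnorm : Integrable (fun x ↦ ‖x‖) (stdGaussian (EuclideanSpace ℝ κ)) :=
    IsGaussian.integrable_id.norm
  have hsum := integrable_iSup_dual_apply
    ((stdGaussian (EuclideanSpace ℝ κ)).prod (stdGaussian (EuclideanSpace ℝ ι)))
    (isBounded_range_coprod_innerSL (κ := κ) hT')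
  have hsplit (z : EuclideanSpace ℝ κ × EuclideanSpace ℝ ι) :
      ⨆ p : Metric.sphere (0 : EuclideanSpace ℝ κ) 1 × T, (⟪p.1.1, z.1⟫ + ⟪p.2.1, z.2⟫) ≤
        ‖z.1‖ + ⨆ v : T, ⟪(v : EuclideanSpace ℝ ι), z.2⟫ := by
    refine ciSup_le fun p ↦ add_le_add ?_ (le_ciSup (bddAbove_range_inner hTbdd z.2) p.2)
    simpa [mem_sphere_zero_iff_norm.1 p.1.2] using real_inner_le_norm p.1.1 z.1
  refine (integral_mono hsum ((hnorm.comp_fst _).add (hwidth.comp_snd _)) hsplit).trans ?_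
  have hfst := integral_fun_fst (μ := stdGaussian (EuclideanSpace ℝ κ))
    (ν := stdGaussian (EuclideanSpace ℝ ι)) fun x ↦ ‖x‖
  have hsnd := integral_fun_snd (μ := stdGaussian (EuclideanSpace ℝ κ))
    (ν := stdGaussian (EuclideanSpace ℝ ι))
    fun y ↦ ⨆ v : T, ⟪(v : EuclideanSpace ℝ ι), y⟫
  simp only [probReal_univ, one_smul] at hfst hsnd
  rw [integral_add' (hnorm.comp_fst _) (hwidth.comp_snd _), hfst, hsnd]
  have hle := integral_norm_stdGaussian_le (EuclideanSpace ℝ κ)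
  rw [finrank_euclideanSpace] at hle
  exact add_le_add_left hle _

variable [DecidableEq ι]

/-- The operator `v ↦ A v` of a `κ × ι` matrix `A`, as a function of the vectorized matrix. -/
def matrixCLM : EuclideanSpace ℝ (κ × ι) →L[ℝ] EuclideanSpace ℝ ι →L[ℝ] EuclideanSpace ℝ κ :=
  LinearMap.toContinuousLinearMap <|
    (LinearMap.toContinuousLinearMap (𝕜 := ℝ)).toLinearMap ∘ₗ
    (Matrix.toLpLin 2 2).toLinearMap ∘ₗ
    (LinearEquiv.curry ℝ ℝ κ ι ≪≫ₗ Matrix.ofLinearEquiv ℝ).toLinearMap ∘ₗ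
    (WithLp.linearEquiv 2 ℝ (κ × ι → ℝ)).toLinearMap

lemma matrixCLM_apply (A : EuclideanSpace ℝ (κ × ι)) (v : EuclideanSpace ℝ ι) (k : κ) :
    matrixCLM A v k = ∑ i, A (k, i) * v i := rfl

lemma inner_matrixCLM (A : EuclideanSpace ℝ (κ × ι)) (u : EuclideanSpace ℝ κ)
    (v : EuclideanSpace ℝ ι) : ⟪u, matrixCLM A v⟫ = ⟪outer u v, A⟫ := by
  simp only [outer, PiLp.inner_apply, RCLike.inner_apply, conj_trivial, Fintype.sum_prod_type,
    matrixCLM_apply, Finset.sum_mul]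
  exact Finset.sum_congr rfl fun _ _ ↦ Finset.sum_congr rfl fun _ _ ↦ by ring

lemma norm_matrixCLM_le_iSup_inner_outer [Nonempty κ] (hT : T ⊆ Metric.closedBall 0 1)
    (A : EuclideanSpace ℝ (κ × ι)) {v : EuclideanSpace ℝ ι} (hv : v ∈ T) :
    ‖matrixCLM A v‖ ≤
      ⨆ p : Metric.sphere (0 : EuclideanSpace ℝ κ) 1 × T, ⟪outer p.1.1 p.2.1, A⟫ := by
  obtain ⟨u, hu, huv⟩ :
      ∃ u : EuclideanSpace ℝ κ, ‖u‖ = 1 ∧ ⟪u, matrixCLM A v⟫ = ‖matrixCLM A v‖ := by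
    obtain h | h := eq_or_ne (matrixCLM A v) 0
    · obtain ⟨u, hu⟩ := exists_norm_eq (EuclideanSpace ℝ κ) zero_le_one
      exact ⟨u, hu, by simp [h]⟩
    · refine ⟨‖matrixCLM A v‖⁻¹ • matrixCLM A v, norm_smul_inv_norm h, ?_⟩
      rw [real_inner_smul_left, real_inner_self_eq_norm_mul_norm,
        inv_mul_cancel_left₀ (norm_ne_zero_iff.2 h)]
  rw [← huv, inner_matrixCLM]
  have hbdd := bddAbove_range_dual_apply
    (totallyBounded_range_innerSL_outer (κ := κ) hT).isBounded A
  exact le_ciSup hbdd (⟨u, mem_sphere_zero_iff_norm.2 hu⟩, ⟨v, hv⟩)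

theorem integral_iSup_norm_matrixCLM_le (hT : T.Nonempty) (hT' : T ⊆ Metric.closedBall 0 1) :
    ∫ A, ⨆ v : T, ‖matrixCLM A (v : EuclideanSpace ℝ ι)‖
      ∂stdGaussian (EuclideanSpace ℝ (κ × ι)) ≤ √(Fintype.card κ) + gaussianWidth T := by
  have hTbdd : Bornology.IsBounded T := Metric.isBounded_closedBall.subset hT'
  have := hT.to_subtype
  obtain hκ | hκ := isEmpty_or_nonempty κ
  · have hzero (x : EuclideanSpace ℝ κ) : ‖x‖ = 0 := by simp [Subsingleton.elim x 0]
    simpa only [hzero, Real.iSup_const_zero, integral_zero, Fintype.card_of_isEmpty, Nat.cast_zero,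
      Real.sqrt_zero, zero_add] using gaussianWidth_nonneg hT hTbdd
  have : Nonempty (Metric.sphere (0 : EuclideanSpace ℝ κ) 1) :=
    (NormedSpace.sphere_nonempty.2 zero_le_one).to_subtype
  have hint := integrable_iSup_dual_apply (stdGaussian (EuclideanSpace ℝ (κ × ι)))
    (totallyBounded_range_innerSL_outer (κ := κ) hT').isBounded
  refine (integral_mono_of_nonneg (.of_forall fun A ↦ Real.iSup_nonneg fun v ↦ norm_nonneg _)
    hint (.of_forall fun A ↦ ?_)).trans
      ((integral_iSup_inner_outer_le hT hT').trans (integral_iSup_inner_add_inner_le hT hT'))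
  exact ciSup_le fun v ↦ norm_matrixCLM_le_iSup_inner_outer hT' A v.2

end Chevet

section BilinearNorm

variable {E F G : Type*} [NormedAddCommGroup E] [NormedSpace ℝ E] [NormedAddCommGroup F]
  [NormedSpace ℝ F] [NormedAddCommGroup G] [NormedSpace ℝ G] {T : Set F}

lemma bddAbove_range_norm_apply (f : F →L[ℝ] G) (hT : T ⊆ Metric.closedBall 0 1) :
    BddAbove (Set.range fun v : T ↦ ‖f v‖) :=
  ⟨‖f‖, Set.forall_mem_range.2 fun v ↦ f.unit_le_opNorm v (mem_closedBall_zero_iff.1 (hT v.2))⟩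

variable [MeasurableSpace E] [BorelSpace E] [CompleteSpace E] [SecondCountableTopology E]
  (μ : Measure E) [IsGaussian μ] (L : E →L[ℝ] F →L[ℝ] G)

lemma integrable_norm_continuousLinearMap : Integrable (fun x ↦ ‖L x‖) μ :=
  (L.integrable_comp IsGaussian.integrable_id).norm

lemma integrable_iSup_norm_continuousLinearMap (hT : T ⊆ Metric.closedBall 0 1) :
    Integrable (fun x ↦ ⨆ v : T, ‖L x v‖) μ := by
  have hmeas : Measurable fun x ↦ ⨆ v : T, ‖L x v‖ :=
    (lowerSemicontinuous_ciSup (fun x ↦ bddAbove_range_norm_apply (L x) hT) fun v ↦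
      (by fun_prop : Continuous fun x ↦ ‖L x v‖).lowerSemicontinuous).measurable
  refine (integrable_norm_continuousLinearMap μ L).mono' hmeas.aestronglyMeasurable
    (.of_forall fun x ↦ ?_)
  rw [Real.norm_of_nonneg (Real.iSup_nonneg fun _ ↦ norm_nonneg _)]
  exact Real.iSup_le (fun v ↦ (L x).unit_le_opNorm v (mem_closedBall_zero_iff.1 (hT v.2)))
    (norm_nonneg _)

end BilinearNorm

section LstarRank

open scoped RealInnerProductSpace Matrix

lemma integral_norm_matrixCLM_le (κ ι : Type*) [Fintype κ] [Fintype ι] [DecidableEq ι] :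
    ∫ A, ‖matrixCLM A‖ ∂stdGaussian (EuclideanSpace ℝ (κ × ι)) ≤
      √(Fintype.card κ) + √(Fintype.card ι) := by
  have hnorm (A : EuclideanSpace ℝ (κ × ι)) :
      ‖matrixCLM A‖ = ⨆ v : Metric.closedBall (0 : EuclideanSpace ℝ ι) 1, ‖matrixCLM A v‖ := by
    rw [← ContinuousLinearMap.sSup_unitClosedBall_eq_norm, sSup_image']
  have hwidth := gaussianWidth_closedBall_le (EuclideanSpace ℝ ι)
  rw [finrank_euclideanSpace] at hwidth
  simp_rw [hnorm]
  refine (integral_iSup_norm_matrixCLM_le (Metric.nonempty_closedBall.2 zero_le_one)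
    subset_rfl).trans ?_
  gcongr

/-- The vectorization of a matrix in row-major order, the identification of matrices with a
Euclidean space under which the Frobenius norm is the Euclidean norm. -/
def rowVec {κ ι : Type*} (X : Matrix κ ι ℝ) : EuclideanSpace ℝ (κ × ι) := WithLp.toLp 2 Xᵀ.vec

lemma rowVec_eq_sum_outer {κ ι r : Type*} [Fintype κ] [Fintype r]
    (b : OrthonormalBasis r ℝ (EuclideanSpace ℝ κ)) (X : Matrix κ ι ℝ) :
    rowVec X = ∑ k, outer (b k) (WithLp.toLp 2 (Xᵀ *ᵥ b k)) := by
  ext ⟨i, j⟩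
  have hcol := congrArg (fun u ↦ u i) (b.sum_repr' (WithLp.toLp 2 (Xᵀ j)))
  simp only [WithLp.ofLp_sum, Finset.sum_apply, PiLp.smul_apply, smul_eq_mul] at hcol
  simp only [rowVec, outer, WithLp.ofLp_sum, Finset.sum_apply, Matrix.vec]
  rw [← hcol]
  refine Finset.sum_congr rfl fun k _ ↦ ?_
  rw [mul_comm]
  simp [Matrix.mulVec, dotProduct, PiLp.inner_apply]

variable {m n₁ n₂ : ℕ}

lemma norm_transpose_mulVec_eigenvectorBasis (X : Matrix (Fin n₁) (Fin n₂) ℝ) (k : Fin n₁) :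
    ‖(WithLp.toLp 2
      (Xᵀ *ᵥ (Matrix.isHermitian_mul_conjTranspose_self X).eigenvectorBasis k) :
        EuclideanSpace ℝ (Fin n₂))‖ = singVals X k := by
  rw [singVals, Matrix.IsHermitian.eigenvalues_eq, EuclideanSpace.norm_eq]
  congr 1
  simp only [star_trivial, RCLike.re_to_real, Matrix.conjTranspose_eq_transpose_of_trivial]
  rw [← Matrix.mulVec_mulVec, Matrix.dotProduct_mulVec, ← Matrix.mulVec_transpose]
  simp only [dotProduct, ← sq, Real.norm_eq_abs, sq_abs]

lemma inner_rowVec_le (X : Matrix (Fin n₁) (Fin n₂) ℝ) (H : EuclideanSpace ℝ (Fin n₁ × Fin n₂)) :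
    ⟪rowVec X, H⟫ ≤ ‖matrixCLM H‖ * nuclearNorm X := by
  let b := (Matrix.isHermitian_mul_conjTranspose_self X).eigenvectorBasis
  let w (k : Fin n₁) : EuclideanSpace ℝ (Fin n₂) := WithLp.toLp 2 (Xᵀ *ᵥ b k)
  calc ⟪rowVec X, H⟫ = ∑ k, ⟪b k, matrixCLM H (w k)⟫ := by
        simp_rw [rowVec_eq_sum_outer b X, sum_inner, inner_matrixCLM, w]
    _ ≤ ∑ k, ‖matrixCLM H‖ * singVals X k := by
        refine Finset.sum_le_sum fun k _ ↦ (real_inner_le_norm _ _).trans ?_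
        rw [b.norm_eq_one, one_mul, ← norm_transpose_mulVec_eigenvectorBasis]
        exact (matrixCLM H).le_opNorm (w k)
    _ = ‖matrixCLM H‖ * nuclearNorm X := (Finset.mul_sum _ _ _).symm

lemma norm_rowVec (X : Matrix (Fin n₁) (Fin n₂) ℝ) : ‖rowVec X‖ = frobNorm X := by
  simp [EuclideanSpace.norm_eq, frobNorm, rowVec, Matrix.vec, Fintype.sum_prod_type]

lemma inv_frobNorm_mul_nuclearNorm_le (X : Matrix (Fin n₁) (Fin n₂) ℝ) :
    (frobNorm X)⁻¹ * nuclearNorm X ≤ √(lstarRank X) := by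
  refine Real.le_sqrt_of_sq_le (le_of_eq ?_)
  rw [mul_pow, inv_pow, lstarRank, div_eq_inv_mul]

/-- The normalizations `X / ‖X‖_F` of the matrices of ℓ*-rank at most `τ`, vectorized. It contains
`0`, as the normalization of `X = 0`, so it is never empty for `0 ≤ τ`. -/
def lstarUnitSet (n₁ n₂ : ℕ) (τ : ℝ) : Set (EuclideanSpace ℝ (Fin n₁ × Fin n₂)) :=
  (fun X ↦ (frobNorm X)⁻¹ • rowVec X) '' {X | lstarRank X ≤ τ}

lemma lstarUnitSet_nonempty {τ : ℝ} (hτ : 0 ≤ τ) : (lstarUnitSet n₁ n₂ τ).Nonempty :=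
  Set.Nonempty.image _ ⟨0, by simpa [lstarRank, frobNorm] using hτ⟩

lemma lstarUnitSet_subset_closedBall (n₁ n₂ : ℕ) (τ : ℝ) :
    lstarUnitSet n₁ n₂ τ ⊆ Metric.closedBall 0 1 := by
  rintro _ ⟨X, -, rfl⟩
  rw [mem_closedBall_zero_iff, norm_smul, norm_inv, ← norm_rowVec, norm_norm]
  exact inv_mul_le_one

lemma inner_le_of_mem_lstarUnitSet {τ : ℝ} {v : EuclideanSpace ℝ (Fin n₁ × Fin n₂)}
    (hv : v ∈ lstarUnitSet n₁ n₂ τ) (H : EuclideanSpace ℝ (Fin n₁ × Fin n₂)) :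
    ⟪v, H⟫ ≤ √τ * ‖matrixCLM H‖ := by
  obtain ⟨X, hX, rfl⟩ := hv
  have hF : 0 ≤ (frobNorm X)⁻¹ := inv_nonneg.2 (Real.sqrt_nonneg _)
  calc ⟪(frobNorm X)⁻¹ • rowVec X, H⟫ = (frobNorm X)⁻¹ * ⟪rowVec X, H⟫ := real_inner_smul_left _ _ _
    _ ≤ (frobNorm X)⁻¹ * (‖matrixCLM H‖ * nuclearNorm X) :=
        mul_le_mul_of_nonneg_left (inner_rowVec_le X H) hF
    _ = (frobNorm X)⁻¹ * nuclearNorm X * ‖matrixCLM H‖ := by ring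
    _ ≤ √τ * ‖matrixCLM H‖ := by
        gcongr
        exact (inv_frobNorm_mul_nuclearNorm_le X).trans (Real.sqrt_le_sqrt hX)

lemma gaussianWidth_lstarUnitSet_le (n₁ n₂ : ℕ) {τ : ℝ} (hτ : 0 ≤ τ) :
    gaussianWidth (lstarUnitSet n₁ n₂ τ) ≤ √τ * (√n₁ + √n₂) := by
  have hint := integrable_norm_continuousLinearMap
    (stdGaussian (EuclideanSpace ℝ (Fin n₁ × Fin n₂))) matrixCLM
  have hnorm := integral_norm_matrixCLM_le (Fin n₁) (Fin n₂)
  simp only [Fintype.card_fin] at hnorm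
  calc gaussianWidth (lstarUnitSet n₁ n₂ τ)
      ≤ ∫ H, √τ * ‖matrixCLM H‖ ∂stdGaussian (EuclideanSpace ℝ (Fin n₁ × Fin n₂)) :=
        gaussianWidth_le_integral (lstarUnitSet_nonempty hτ)
          (Metric.isBounded_closedBall.subset (lstarUnitSet_subset_closedBall n₁ n₂ τ))
          (hint.const_mul _) fun v hv H ↦ inner_le_of_mem_lstarUnitSet hv H
    _ ≤ √τ * (√n₁ + √n₂) := by
        rw [integral_const_mul]
        gcongr

lemma vnorm_scaledOp (ω : Fin m × Fin n₁ × Fin n₂ → ℝ) (X : Matrix (Fin n₁) (Fin n₂) ℝ) :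
    vnorm (scaledOp ω X) = (√m)⁻¹ * ‖matrixCLM (WithLp.toLp 2 ω) (rowVec X)‖ := by
  have happly : WithLp.toLp 2 (scaledOp ω X) =
      (√m)⁻¹ • matrixCLM (WithLp.toLp 2 ω) (rowVec X) := by
    ext k
    simp only [scaledOp, opOf, matInner, ensembleMatrices, PiLp.smul_apply, matrixCLM_apply, rowVec,
      Matrix.vec, Matrix.trace, Matrix.diag, Matrix.mul_apply, Matrix.transpose_apply,
      Matrix.of_apply, Fintype.sum_prod_type, smul_eq_mul]
    rw [Finset.sum_comm, div_eq_inv_mul]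
  calc vnorm (scaledOp ω X) = ‖(WithLp.toLp 2 (scaledOp ω X) : EuclideanSpace ℝ (Fin m))‖ := by
        simp [vnorm, EuclideanSpace.norm_eq]
    _ = (√m)⁻¹ * ‖matrixCLM (WithLp.toLp 2 ω) (rowVec X)‖ := by
        rw [happly, norm_smul, Real.norm_of_nonneg (by positivity)]

lemma cmsvMax_scaledOp_le (ω : Fin m × Fin n₁ × Fin n₂ → ℝ) (τ : ℝ) :
    cmsvMax (scaledOp ω) τ ≤
      (√m)⁻¹ * ⨆ v : lstarUnitSet n₁ n₂ τ, ‖matrixCLM (WithLp.toLp 2 ω) v‖ := by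
  refine Real.sSup_le ?_ (mul_nonneg (by positivity) (Real.iSup_nonneg fun _ ↦ norm_nonneg _))
  rintro _ ⟨X, -, hX, rfl⟩
  rw [vnorm_scaledOp, mul_div_assoc]
  have hF : ‖(frobNorm X)⁻¹‖ = (frobNorm X)⁻¹ :=
    Real.norm_of_nonneg (inv_nonneg.2 (Real.sqrt_nonneg _))
  refine mul_le_mul_of_nonneg_left ?_ (by positivity)
  rw [div_eq_inv_mul, ← hF, ← norm_smul, ← map_smul]
  exact le_ciSup (bddAbove_range_norm_apply (matrixCLM (WithLp.toLp 2 ω))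
    (lstarUnitSet_subset_closedBall n₁ n₂ τ)) ⟨_, X, hX, rfl⟩

lemma cmsvMax_nonneg (A : Matrix (Fin n₁) (Fin n₂) ℝ → (Fin m → ℝ)) (τ : ℝ) :
    0 ≤ cmsvMax A τ := by
  refine Real.sSup_nonneg ?_
  rintro _ ⟨X, -, -, rfl⟩
  exact div_nonneg (Real.sqrt_nonneg _) (Real.sqrt_nonneg _)

lemma measurePreserving_toLp_gaussianEnsemble (m n₁ n₂ : ℕ) :
    MeasurePreserving (WithLp.toLp 2) (gaussianEnsemble m n₁ n₂)
      (stdGaussian (EuclideanSpace ℝ (Fin m × Fin n₁ × Fin n₂))) :=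
  ⟨by fun_prop, map_pi_eq_stdGaussian⟩

end LstarRank

theorem stmt13_general {m n₁ n₂ : ℕ} (τ : ℝ) (hτ : 1 ≤ τ) :
    ∫ ω, cmsvMax (scaledOp ω) τ ∂gaussianEnsemble m n₁ n₂ ≤ 1 + √(τ / m) * (√n₁ + √n₂) := by
  let T := lstarUnitSet n₁ n₂ τ
  have hτ₀ : 0 ≤ τ := zero_le_one.trans hτ
  have hT := lstarUnitSet_subset_closedBall n₁ n₂ τ
  have hω := measurePreserving_toLp_gaussianEnsemble m n₁ n₂
  have hint := (integrable_iSup_norm_continuousLinearMap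
    (stdGaussian (EuclideanSpace ℝ (Fin m × Fin n₁ × Fin n₂))) matrixCLM hT).const_mul (√m)⁻¹
  calc ∫ ω, cmsvMax (scaledOp ω) τ ∂gaussianEnsemble m n₁ n₂
      ≤ ∫ ω, (√m)⁻¹ * ⨆ v : T, ‖matrixCLM (WithLp.toLp 2 ω) v‖ ∂gaussianEnsemble m n₁ n₂ :=
        integral_mono_of_nonneg (.of_forall fun ω ↦ cmsvMax_nonneg _ τ)
          (hω.integrable_comp_of_integrable hint) (.of_forall fun ω ↦ cmsvMax_scaledOp_le ω τ)
    _ = (√m)⁻¹ * ∫ A, ⨆ v : T, ‖matrixCLM A v‖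
          ∂stdGaussian (EuclideanSpace ℝ (Fin m × Fin n₁ × Fin n₂)) := by
        rw [← integral_const_mul,
          ← hω.integral_comp (MeasurableEquiv.toLp 2 _).measurableEmbedding]
    _ ≤ (√m)⁻¹ * (√m + √τ * (√n₁ + √n₂)) := by
        gcongr
        refine (integral_iSup_norm_matrixCLM_le (lstarUnitSet_nonempty hτ₀) hT).trans ?_
        rw [Fintype.card_fin]
        gcongr
        exact gaussianWidth_lstarUnitSet_le n₁ n₂ hτ₀
    _ ≤ 1 + √(τ / m) * (√n₁ + √n₂) := by
        rw [mul_add, ← mul_assoc, Real.sqrt_div hτ₀, div_eq_inv_mul]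
        gcongr
        exact inv_mul_le_one

/-- for the Gaussian ensemble, `E[ρ_τ^max(𝒜/√m)] ≤ 1 + 3√(τ n₂/m)`. -/
theorem stmt13 {m n₁ n₂ : ℕ} (hn : n₁ ≤ n₂) (τ : ℝ) (hτ1 : 1 ≤ τ) (hτ2 : τ ≤ (n₁ : ℝ)) :
    (∫ ω, cmsvMax (scaledOp ω) τ ∂(gaussianEnsemble m n₁ n₂)) ≤
      1 + 3 * Real.sqrt (τ * n₂ / m) := by
  have hsqrt : √(n₁ : ℝ) ≤ √n₂ := by gcongr
  refine (stmt13_general τ hτ1).trans ?_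
  rw [mul_div_right_comm, Real.sqrt_mul (by positivity), mul_left_comm]
  gcongr
  linarith [Real.sqrt_nonneg (n₂ : ℝ)]

end
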